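/- arXiv:0912.1518 — 3 statements merged into one kernel-verified Lean document; each statement's English description precedes it below -/
import Mathlib

section
/- Let l_1, m_1 be positive integers with l_1 ≤ m_1. Then the number of subsets X of [l_1,m_1] such that l_1 ∈ X and gcd(X) = 1 equals Σ_{d | l_1} μ(d) · 2^{⌊m_1/d⌋ − l_1/d}. -/
lemma aux_Ioc (l m d : ℕ) (h : l ≤ m) :
    ((Finset.Ioc l m).filter (fun x => d ∣ x)).card = m / d - l / d := by
  have h1 := Nat.Ioc_filter_dvd_card_eq_div m d
  have h2 := Nat.Ioc_filter_dvd_card_eq_div l d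
  rw [← Finset.Ioc_union_Ioc_eq_Ioc (Nat.zero_le l) h, Finset.filter_union,
    Finset.card_union_of_disjoint] at h1
  · omega
  · rw [Finset.disjoint_left]
    intro a ha hb
    simp only [Finset.mem_filter, Finset.mem_Ioc] at ha hb
    omega

lemma aux_count (l m d : ℕ) (h : l ≤ m) (hd : d ∣ l) :
    (((Finset.Icc l m).powerset.filter (fun X : Finset ℕ => l ∈ X)).filter
      (fun X => d ∣ X.gcd id)).card = 2 ^ (m / d - l / d) := by
  rw [← aux_Ioc l m d h, ← Finset.card_powerset]
  symm
  refine Finset.card_bij' (fun Y _ => insert l Y) (fun X _ => X.erase l) ?_ ?_ ?_ ?_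
  · intro Y hY
    simp only [Finset.mem_powerset, Finset.mem_filter, Finset.subset_iff, Finset.mem_Icc,
      Finset.mem_Ioc, Finset.dvd_gcd_iff, Finset.mem_insert, id] at *
    refine ⟨⟨?_, Or.inl (by trivial)⟩, ?_⟩
    · rintro x (rfl | hx)
      · exact ⟨le_rfl, h⟩
      · exact ⟨(hY hx).1.1.le, (hY hx).1.2⟩
    · rintro x (rfl | hx)
      · exact hd
      · exact (hY hx).2
  · intro X hX
    simp only [Finset.mem_powerset, Finset.mem_filter, Finset.subset_iff, Finset.mem_Icc,
      Finset.mem_Ioc, Finset.dvd_gcd_iff, Finset.mem_erase, id] at *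
    rintro x ⟨hx, hx'⟩
    have := hX.1.1 hx'
    exact ⟨⟨by omega, this.2⟩, hX.2 x hx'⟩
  · intro Y hY
    apply Finset.erase_insert
    intro hl
    have := Finset.mem_powerset.1 hY hl
    simp at this
  · intro X hX
    exact Finset.insert_erase (Finset.mem_filter.1 (Finset.mem_filter.1 hX).1).2

/-- Lemma 2(a): the number of relatively prime subsets of `[l₁,m₁]`
containing `l₁` equals `∑_{d ∣ l₁} μ(d) 2^{⌊m₁/d⌋ - l₁/d}`. -/
theorem stmt_3 (l₁ m₁ : ℕ) (hl₁ : 0 < l₁) (h : l₁ ≤ m₁) :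
    ((((Finset.Icc l₁ m₁).powerset).filter
        (fun X : Finset ℕ => l₁ ∈ X ∧ X.gcd id = 1)).card : ℤ)
      = ∑ d ∈ l₁.divisors,
          (ArithmeticFunction.moebius d) * 2 ^ (m₁ / d - l₁ / d) := by
  have key : ∀ g : ℕ, g ∣ l₁ → (if g = 1 then (1 : ℤ) else 0)
      = ∑ d ∈ l₁.divisors, if d ∣ g then ArithmeticFunction.moebius d else 0 := by
    intro g hg
    rw [← Finset.sum_filter]
    have e : l₁.divisors.filter (fun d => d ∣ g) = g.divisors := by
      ext d
      simp only [Finset.mem_filter, Nat.mem_divisors]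
      have hg0 : g ≠ 0 := by rintro rfl; simp at hg; omega
      exact ⟨fun hh => ⟨hh.2, hg0⟩, fun hh => ⟨⟨hh.1.trans hg, hl₁.ne'⟩, hh.1⟩⟩
    rw [e, ← ArithmeticFunction.coe_mul_zeta_apply, ArithmeticFunction.moebius_mul_coe_zeta,
      ArithmeticFunction.one_apply]
  rw [← Finset.filter_filter, Finset.card_filter]
  push_cast
  rw [Finset.sum_congr rfl (fun X hX => key (X.gcd id)
    (Finset.gcd_dvd (f := id) (Finset.mem_filter.1 hX).2)), Finset.sum_comm]
  refine Finset.sum_congr rfl fun d hd => ?_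
  rw [← Finset.sum_filter, Finset.sum_const, aux_count l₁ m₁ d h (Nat.dvd_of_mem_divisors hd)]
  simp [mul_comm]
end

section
/- Let m_1, l_2, m_2, k be positive integers with m_1 < l_2 ≤ m_2. Then f_k([1,m_1] ∪ [l_2,m_2]) = Σ_{d=1}^{m_2} μ(d) · C(⌊m_1/d⌋ + ⌊m_2/d⌋ − ⌊(l_2−1)/d⌋, k), where C(·,·) denotes the binomial coefficient. -/
lemma aux_moebius_sum (n : ℕ) :
    ∑ d ∈ n.divisors, ArithmeticFunction.moebius d = if n = 1 then 1 else 0 := by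
  rw [← ArithmeticFunction.coe_mul_zeta_apply, ArithmeticFunction.moebius_mul_coe_zeta,
    ArithmeticFunction.one_apply]

lemma aux_count_s8 (m₁ l₂ m₂ d : ℕ) (h₁ : m₁ < l₂) (h₂ : l₂ ≤ m₂) :
    ((Finset.Icc 1 m₁ ∪ Finset.Icc l₂ m₂).filter (fun x => d ∣ x)).card
      = m₁ / d + m₂ / d - (l₂ - 1) / d := by
  have e1 := Nat.Ioc_filter_dvd_card_eq_div m₁ d
  have e2 := Nat.Ioc_filter_dvd_card_eq_div m₂ d
  have e3 := Nat.Ioc_filter_dvd_card_eq_div (l₂ - 1) d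
  have s1 : Finset.Ioc 0 m₁ = Finset.Icc 1 m₁ := by ext; simp; omega
  have s2 : Finset.Ioc 0 m₂ = Finset.Ioc 0 (l₂ - 1) ∪ Finset.Icc l₂ m₂ := by ext; simp; omega
  have d1 : Disjoint (Finset.Icc 1 m₁) (Finset.Icc l₂ m₂) := by
    rw [Finset.disjoint_left]; intro a; simp; omega
  have d2 : Disjoint (Finset.Ioc 0 (l₂ - 1)) (Finset.Icc l₂ m₂) := by
    rw [Finset.disjoint_left]; intro a; simp; omega
  rw [s2, Finset.filter_union,
    Finset.card_union_of_disjoint (Finset.disjoint_filter_filter d2)] at e2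
  rw [s1] at e1
  rw [Finset.filter_union, Finset.card_union_of_disjoint (Finset.disjoint_filter_filter d1)]
  omega

/-- Theorem (special case): `f_k([1,m₁] ∪ [l₂,m₂]) =
∑_{d=1}^{m₂} μ(d) C(⌊m₁/d⌋ + ⌊m₂/d⌋ - ⌊(l₂-1)/d⌋, k)`, where `f_k(A)` counts
the `k`-element relatively prime subsets of `A`. -/
theorem stmt_8 (m₁ l₂ m₂ k : ℕ) (hm₁ : 0 < m₁) (hk : 0 < k)
    (h₁ : m₁ < l₂) (h₂ : l₂ ≤ m₂) :
    ((((Finset.Icc 1 m₁ ∪ Finset.Icc l₂ m₂).powerset).filter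
        (fun X : Finset ℕ => X.card = k ∧ X.gcd id = 1)).card : ℤ)
      = ∑ d ∈ Finset.Icc 1 m₂,
          (ArithmeticFunction.moebius d) *
            (Nat.choose (m₁ / d + m₂ / d - (l₂ - 1) / d) k) := by
  have hA : ∀ x ∈ Finset.Icc 1 m₁ ∪ Finset.Icc l₂ m₂, 0 < x ∧ x ≤ m₂ := by
    intro x; simp; omega
  have hc := fun d => aux_count_s8 m₁ l₂ m₂ d h₁ h₂
  generalize Finset.Icc 1 m₁ ∪ Finset.Icc l₂ m₂ = A at hA hc ⊢
  have key : ∀ X ∈ A.powersetCard k, (if X.gcd id = 1 then (1 : ℤ) else 0)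
      = ∑ d ∈ Finset.Icc 1 m₂, if d ∣ X.gcd id then ArithmeticFunction.moebius d else 0 := by
    intro X hX
    rw [Finset.mem_powersetCard] at hX
    obtain ⟨x, hx⟩ : X.Nonempty := by rw [← Finset.card_pos]; omega
    have hxA := hA x (hX.1 hx)
    have hd : X.gcd id ∣ x := Finset.gcd_dvd (f := id) hx
    have hpos : 0 < X.gcd id := Nat.pos_of_dvd_of_pos hd hxA.1
    have hle : X.gcd id ≤ m₂ := (Nat.le_of_dvd hxA.1 hd).trans hxA.2
    rw [← aux_moebius_sum, ← Finset.sum_filter]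
    apply Finset.sum_congr _ (fun _ _ => rfl)
    ext d
    simp only [Nat.mem_divisors, Finset.mem_filter, Finset.mem_Icc]
    constructor
    · rintro ⟨h, -⟩
      exact ⟨⟨Nat.pos_of_dvd_of_pos h hpos, (Nat.le_of_dvd hpos h).trans hle⟩, h⟩
    · rintro ⟨-, h⟩
      exact ⟨h, hpos.ne'⟩
  have e : A.powerset.filter (fun X : Finset ℕ => X.card = k ∧ X.gcd id = 1)
      = (A.powersetCard k).filter (fun X => X.gcd id = 1) := by
    ext X
    simp only [Finset.mem_filter, Finset.mem_powerset, Finset.mem_powersetCard, and_assoc]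
  rw [e, Finset.card_filter]
  push_cast
  rw [Finset.sum_congr rfl key, Finset.sum_comm]
  refine Finset.sum_congr rfl fun d _ => ?_
  rw [← Finset.sum_filter, Finset.sum_const, ← hc d, ← Finset.card_powersetCard, nsmul_eq_mul,
    mul_comm]
  congr 3
  ext X
  simp only [Finset.mem_filter, Finset.mem_powersetCard, Finset.dvd_gcd_iff, id,
    Finset.subset_iff]
  grind
end

section
/- Let l_1, m_1, l_2, m_2 be positive integers with l_1 ≤ m_1 < l_2 ≤ m_2. Then f([l_1,m_1] ∪ [l_2,m_2]) = Σ_{d=1}^{m_2} μ(d) · (2^{⌊m_1/d⌋ + ⌊m_2/d⌋ − ⌊(l_1−1)/d⌋ − ⌊(l_2−1)/d⌋} − 1). -/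
lemma aux_card (l m d : ℕ) (hl : 0 < l) (h : l ≤ m) :
    ((Finset.Icc l m).filter (fun x => d ∣ x)).card + (l - 1) / d = m / d := by
  rw [← Nat.Ioc_filter_dvd_card_eq_div, ← Nat.Ioc_filter_dvd_card_eq_div,
    ← Finset.card_union_of_disjoint]
  · congr 1
    ext x
    simp only [Finset.mem_union, Finset.mem_filter, Finset.mem_Icc, Finset.mem_Ioc]
    by_cases hd : d ∣ x
    · simp only [hd, and_true]; omega
    · simp [hd]
  · rw [Finset.disjoint_left]
    intro x
    simp only [Finset.mem_filter, Finset.mem_Icc, Finset.mem_Ioc]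
    omega

lemma aux_moebius (g N : ℕ) (hg : 0 < g) (h : g ≤ N) :
    (∑ d ∈ Finset.Icc 1 N, if d ∣ g then ArithmeticFunction.moebius d else 0)
      = if g = 1 then 1 else 0 := by
  rw [← Finset.sum_filter]
  have : (Finset.Icc 1 N).filter (fun d => d ∣ g) = g.divisors := by
    ext d
    simp only [Finset.mem_filter, Finset.mem_Icc, Nat.mem_divisors]
    constructor
    · rintro ⟨_, h2⟩; exact ⟨h2, hg.ne'⟩
    · rintro ⟨h2, _⟩
      exact ⟨⟨Nat.pos_of_dvd_of_pos h2 hg, (Nat.le_of_dvd hg h2).trans h⟩, h2⟩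
  rw [this, ← ArithmeticFunction.coe_mul_zeta_apply, ArithmeticFunction.moebius_mul_coe_zeta,
    ArithmeticFunction.one_apply]

lemma aux_main (S : Finset ℕ) (N : ℕ) (hS : ∀ x ∈ S, 0 < x ∧ x ≤ N) :
    (((S.powerset).filter (fun X : Finset ℕ => X.Nonempty ∧ X.gcd id = 1)).card : ℤ)
      = ∑ d ∈ Finset.Icc 1 N, (ArithmeticFunction.moebius d) *
          (2 ^ (S.filter (fun x => d ∣ x)).card - 1) := by
  have e1 : (((S.powerset).filter (fun X : Finset ℕ => X.Nonempty ∧ X.gcd id = 1)).card : ℤ)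
      = ∑ X ∈ S.powerset.filter (fun X => X.Nonempty), ∑ d ∈ Finset.Icc 1 N,
        if d ∣ X.gcd id then ArithmeticFunction.moebius d else 0 := by
    rw [← Finset.filter_filter, Finset.card_filter]
    push_cast
    refine Finset.sum_congr rfl fun X hX => ?_
    simp only [Finset.mem_filter, Finset.mem_powerset] at hX
    obtain ⟨hXS, x, hx⟩ := hX
    have hd : X.gcd id ∣ x := Finset.gcd_dvd (f := id) hx
    have hx' := hS x (hXS hx)
    rw [aux_moebius _ _ (Nat.pos_of_dvd_of_pos hd hx'.1) ((Nat.le_of_dvd hx'.1 hd).trans hx'.2)]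
  rw [e1, Finset.sum_comm]
  refine Finset.sum_congr rfl fun d _ => ?_
  rw [← Finset.sum_filter, Finset.sum_const, nsmul_eq_mul, mul_comm]
  congr 1
  have e2 : (S.powerset.filter (fun X => X.Nonempty)).filter (fun X => d ∣ X.gcd id)
      = (S.filter (fun x => d ∣ x)).powerset.erase ∅ := by
    ext X
    simp only [Finset.mem_filter, Finset.mem_powerset, Finset.mem_erase, Finset.dvd_gcd_iff, id,
      Finset.subset_iff, Finset.nonempty_iff_ne_empty]
    grind
  rw [e2, Finset.card_erase_of_mem (by simp), Finset.card_powerset, Nat.cast_sub Nat.one_le_two_pow]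
  push_cast
  rfl


/-- Main theorem (a): `f([l₁,m₁] ∪ [l₂,m₂]) =
∑_{d=1}^{m₂} μ(d) (2^{⌊m₁/d⌋ + ⌊m₂/d⌋ - ⌊(l₁-1)/d⌋ - ⌊(l₂-1)/d⌋} - 1)`, where
`f(A)` counts the nonempty relatively prime subsets of `A`. -/
theorem stmt_9 (l₁ m₁ l₂ m₂ : ℕ) (hl₁ : 0 < l₁)
    (h₁ : l₁ ≤ m₁) (h₂ : m₁ < l₂) (h₃ : l₂ ≤ m₂) :
    ((((Finset.Icc l₁ m₁ ∪ Finset.Icc l₂ m₂).powerset).filter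
        (fun X : Finset ℕ => X.Nonempty ∧ X.gcd id = 1)).card : ℤ)
      = ∑ d ∈ Finset.Icc 1 m₂,
          (ArithmeticFunction.moebius d) *
            (2 ^ (m₁ / d + m₂ / d - (l₁ - 1) / d - (l₂ - 1) / d) - 1) := by
  rw [aux_main _ m₂]
  · refine Finset.sum_congr rfl fun d _ => ?_
    have a1 := aux_card l₁ m₁ d hl₁ h₁
    have a2 := aux_card l₂ m₂ d (by omega) h₃
    rw [Finset.filter_union, Finset.card_union_of_disjoint]
    · congr 3
      omega
    · rw [Finset.disjoint_left]
      intro x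
      simp only [Finset.mem_filter, Finset.mem_Icc]
      omega
  · intro x
    simp only [Finset.mem_union, Finset.mem_Icc]
    omega
end
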